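/- Let E, F, G be real constants with F² + E·G > 0 and Q(u,v) = -E·u² + 2·F·u·v + G·v². Suppose E < 0. Let c : [0,1] → ℝ² be a C¹ curve with continuous nowhere-vanishing derivative satisfying Q(c'(t)) ≤ 0 for all t, with c(0) = (x₀,y₀) and c(1) = (x₁,y₁). Then for every t ∈ [0,1], the second component (c(t)).2 lies in the closed interval [min(y₀,y₁), max(y₀,y₁)]. (This is the diamond-confinement step in Theorem 2, (iv) ⇒ (vi): every causal curve from p to q has its image contained in the slab S¹ × [y₀,y₁], so causal diamonds J⁺(p) ∩ J⁻(q) are contained in compact sets.) -/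

import Mathlib

/-!
A horizontal vector is spacelike when `E < 0`, so the height of a causal curve has nowhere-vanishing
derivative. By Darboux's theorem this derivative has constant sign, even where it is discontinuous;
hence the height is strictly monotone and stays between its endpoint values.
-/

/-- The quadratic form of the flat Lorentzian metric `g = -E dx² + 2F dx dy + G dy²`. -/
def Qform (E F G : ℝ) (p : ℝ × ℝ) : ℝ :=
  -E * p.1 ^ 2 + 2 * F * p.1 * p.2 + G * p.2 ^ 2

open Set

theorem strictMonoOn_or_strictAntiOn_of_hasDerivWithinAt_ne_zero {D : Set ℝ} (hD : Convex ℝ D)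
    {f f' : ℝ → ℝ} (hf : ContinuousOn f D)
    (hf' : ∀ x ∈ interior D, HasDerivWithinAt f (f' x) (interior D) x)
    (hf'₀ : ∀ x ∈ interior D, f' x ≠ 0) : StrictMonoOn f D ∨ StrictAntiOn f D := by
  rcases hasDerivWithinAt_forall_lt_or_forall_gt_of_forall_ne hD.interior hf' hf'₀ with hneg | hpos
  · exact .inr (strictAntiOn_of_hasDerivWithinAt_neg hD hf hf' hneg)
  · exact .inl (strictMonoOn_of_hasDerivWithinAt_pos hD hf hf' hpos)

section Causal

variable {E F G : ℝ}

theorem Qform_pos_of_snd_eq_zero (hE : E < 0) {p : ℝ × ℝ} (hp : p ≠ 0) (hp₂ : p.2 = 0) :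
    0 < Qform E F G p := by
  have hp₁ : p.1 ≠ 0 := fun hp₁ ↦ hp (Prod.ext hp₁ hp₂)
  have hQ : Qform E F G p = -E * p.1 ^ 2 := by simp [Qform, hp₂]
  rw [hQ]
  exact mul_pos (neg_pos.mpr hE) (by positivity)

theorem snd_ne_zero_of_Qform_nonpos (hE : E < 0) {p : ℝ × ℝ} (hp : p ≠ 0)
    (hQ : Qform E F G p ≤ 0) : p.2 ≠ 0 :=
  fun hp₂ ↦ (Qform_pos_of_snd_eq_zero hE hp hp₂).not_ge hQ

variable {c c' : ℝ → ℝ × ℝ}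

theorem strictMonoOn_or_strictAntiOn_snd_of_Qform_nonpos (hE : E < 0) {D : Set ℝ}
    (hD : Convex ℝ D) (hcont : ContinuousOn c D)
    (hderiv : ∀ t ∈ interior D, HasDerivWithinAt c (c' t) (interior D) t)
    (hne : ∀ t ∈ interior D, c' t ≠ 0) (hcausal : ∀ t ∈ interior D, Qform E F G (c' t) ≤ 0) :
    StrictMonoOn (fun t ↦ (c t).2) D ∨ StrictAntiOn (fun t ↦ (c t).2) D :=
  strictMonoOn_or_strictAntiOn_of_hasDerivWithinAt_ne_zero hD hcont.snd
    (fun t ht ↦ (hderiv t ht).snd)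
    (fun t ht ↦ snd_ne_zero_of_Qform_nonpos hE (hne t ht) (hcausal t ht))

theorem stmt_8_general (hE : E < 0) {a b : ℝ} (hcont : ContinuousOn c (uIcc a b))
    (hderiv : ∀ t ∈ uIoo a b, HasDerivAt c (c' t) t)
    (hne : ∀ t ∈ uIoo a b, c' t ≠ 0) (hcausal : ∀ t ∈ uIoo a b, Qform E F G (c' t) ≤ 0) :
    MapsTo (fun t ↦ (c t).2) (uIcc a b) (uIcc (c a).2 (c b).2) := by
  have hint : interior (uIcc a b) = uIoo a b := interior_Icc
  rw [← hint] at hderiv hne hcausal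
  rcases strictMonoOn_or_strictAntiOn_snd_of_Qform_nonpos hE (convex_uIcc a b) hcont
    (fun t ht ↦ (hderiv t ht).hasDerivWithinAt) hne hcausal with hmono | hanti
  · exact hmono.monotoneOn.mapsTo_uIcc
  · exact hanti.antitoneOn.mapsTo_uIcc

end Causal

/-- Diamond confinement (Theorem 2, (iv) ⇒ (vi)): if `E < 0`, every causal C¹ curve
with nowhere-vanishing derivative from `(x₀, y₀)` to `(x₁, y₁)` stays inside the slab
`S¹ × [min y₀ y₁, max y₀ y₁]`. -/
theorem stmt_8 (E F G : ℝ) (hLor : F ^ 2 + E * G > 0) (hE : E < 0)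
    (c c' : ℝ → ℝ × ℝ) (x₀ y₀ x₁ y₁ : ℝ)
    (hderiv : ∀ t ∈ Set.Icc (0 : ℝ) 1, HasDerivAt c (c' t) t)
    (hcont : ContinuousOn c' (Set.Icc (0 : ℝ) 1))
    (hne : ∀ t ∈ Set.Icc (0 : ℝ) 1, c' t ≠ 0)
    (hcausal : ∀ t ∈ Set.Icc (0 : ℝ) 1, Qform E F G (c' t) ≤ 0)
    (h0 : c 0 = (x₀, y₀)) (h1 : c 1 = (x₁, y₁)) :
    ∀ t ∈ Set.Icc (0 : ℝ) 1, (c t).2 ∈ Set.Icc (min y₀ y₁) (max y₀ y₁) := by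
  rw [← uIcc_of_le zero_le_one] at hderiv hne hcausal ⊢
  simpa only [h0, h1] using! stmt_8_general hE (HasDerivAt.continuousOn hderiv)
    (fun t ht ↦ hderiv t (uIoo_subset_uIcc_self ht)) (fun t ht ↦ hne t (uIoo_subset_uIcc_self ht))
    (fun t ht ↦ hcausal t (uIoo_subset_uIcc_self ht))
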